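/- Let (n_k) be a strictly increasing sequence of natural numbers and γ a Radon measure on ℝ such that, writing F_m = ℙ_2 ∩ [−m, m], for every continuous compactly supported f : ℝ → ℂ one has (1/card F_{n_k})·Σ_{x,y∈F_{n_k}} f(x−y) → ∫ f dγ as k → ∞. Then γ({2}) = 1/2 if and only if there are infinitely many twin primes (i.e., infinitely many primes p with p + 2 prime). -/

import Mathlib

open Filter Topology Set MeasureTheory

/-- The set of prime numbers together with their negatives, as a subset of `ℝ`. -/
def PrimesR : Set ℝ := {x | ∃ p : ℕ, p.Prime ∧ (x = (p : ℝ) ∨ x = -(p : ℝ))}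

/-- `ℙ_2 = {p : p ∈ ℙ, p + 2 ∈ ℙ} ∪ {p + 2 : p ∈ ℙ, p + 2 ∈ ℙ}`, the twin primes and
their negatives. -/
def P2 : Set ℝ :=
  {x | (x ∈ PrimesR ∧ x + 2 ∈ PrimesR) ∨ (x - 2 ∈ PrimesR ∧ x ∈ PrimesR)}

/-- The (counting-normalised) autocorrelation sum of the finite sample `F` applied to a
test function `f`; interpreted as `0` when `F = ∅` (since then `(F.ncard : ℂ)⁻¹ = 0`). -/
noncomputable def autoCorr (F : Set ℝ) (f : ℝ → ℂ) : ℂ :=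
  ((F.ncard : ℂ))⁻¹ * ∑ᶠ x ∈ F, ∑ᶠ y ∈ F, f (x - y)

/-!
Testing the autocorrelation against ever narrower bumps around `2` shows that `γ {2}` is the limit
of `card (F ∩ (F + 2)) / card F` over the windows `F = P2 ∩ [-R, R]`. Every twin prime has a
neighbour at distance `2`, so `F ∩ (F + 2)` and `F ∩ (F - 2)` cover `F` up to the at most four
integers near the ends of the window; they have equal cardinality, and by divisibility by `3` they
meet only in `±5`. Hence `2 card (F ∩ (F + 2)) = card F + O(1)`, and the ratio tends to `1/2` if
`P2` is infinite. If `P2` is finite, the windows eventually exhaust it, no boundary error is left,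
and the double counting of `±5` makes the limit strictly larger than `1/2`.
-/

section SelfOverlap

variable {G : Type*} [AddGroup G]

/-- The overlap `F ∩ (F + t)` of a set with its translate; its points are the
first entries of the pairs `(x, y)` in `F × F` with `x - y = t`. -/
def selfOverlap (F : Set G) (t : G) : Set G := {x ∈ F | x - t ∈ F}

lemma selfOverlap_subset (F : Set G) (t : G) : selfOverlap F t ⊆ F := sep_subset _ _

lemma selfOverlap_mono {F F' : Set G} (h : F ⊆ F') (t : G) :
    selfOverlap F t ⊆ selfOverlap F' t :=
  fun _ hx => ⟨h hx.1, h hx.2⟩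

lemma ncard_selfOverlap_neg (F : Set G) (t : G) :
    (selfOverlap F (-t)).ncard = (selfOverlap F t).ncard := by
  have image_eq : (· + t) '' selfOverlap F (-t) = selfOverlap F t := by
    ext x
    simp [selfOverlap, ← sub_eq_add_neg, and_comm]
  rw [← image_eq, ncard_image_of_injective _ (add_left_injective t)]

lemma two_mul_ncard_selfOverlap_add {F : Set G} (hF : F.Finite) (t : G) :
    2 * (selfOverlap F t).ncard + (F \ (selfOverlap F t ∪ selfOverlap F (-t))).ncard =
      F.ncard + (selfOverlap F t ∩ selfOverlap F (-t)).ncard := by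
  have inclusion_exclusion := ncard_union_add_ncard_inter (selfOverlap F t) (selfOverlap F (-t))
    (hF.subset (selfOverlap_subset F t)) (hF.subset (selfOverlap_subset F (-t)))
  have partition := ncard_sdiff_add_ncard_of_subset
    (union_subset (selfOverlap_subset F t) (selfOverlap_subset F (-t))) hF
  rw [ncard_selfOverlap_neg] at inclusion_exclusion
  lia

end SelfOverlap

section Windows

/-- The window `Λ ∩ [-R, R]` of a point set `Λ`. -/
abbrev window (Λ : Set ℝ) (R : ℝ) : Set ℝ := Λ ∩ Icc (-R) R

variable {Λ : Set ℝ}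

lemma finite_window (hΛ : Λ ⊆ range ((↑) : ℤ → ℝ)) (R : ℝ) : (window Λ R).Finite := by
  have finite_integers : (((↑) : ℤ → ℝ) ⁻¹' Icc (-R) R).Finite := by
    rw [Int.preimage_Icc]
    exact finite_Icc _ _
  refine (finite_integers.image (↑)).subset ?_
  rintro x ⟨hx, hxR⟩
  obtain ⟨z, rfl⟩ := hΛ hx
  exact mem_image_of_mem _ hxR

lemma eventually_subset_window {s : Set ℝ} (hs : s.Finite) (hsΛ : s ⊆ Λ) :
    ∀ᶠ R in atTop, s ⊆ window Λ R :=
  (eventually_all_finite hs).2 fun x hx =>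
    (eventually_ge_atTop |x|).mono fun _ hR => ⟨hsΛ hx, abs_le.1 hR⟩

lemma eventually_window_eq (hΛ : Λ.Finite) : ∀ᶠ R in atTop, window Λ R = Λ :=
  (eventually_subset_window hΛ subset_rfl).mono fun _ => inter_subset_left.antisymm

lemma tendsto_ncard_window (hfin : ∀ R, (window Λ R).Finite) (hΛ : Λ.Infinite) :
    Tendsto (fun R => (window Λ R).ncard) atTop atTop := by
  refine tendsto_atTop.2 fun N => ?_
  obtain ⟨s, hsΛ, rfl⟩ := hΛ.exists_subset_card_eq N
  filter_upwards [eventually_subset_window s.finite_toSet hsΛ] with R hsR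
  rw [← ncard_coe_finset]
  exact ncard_le_ncard hsR (hfin R)

lemma lt_abs_add_abs_of_mem_window_diff {t R x : ℝ}
    (hΛ : Λ ⊆ selfOverlap Λ t ∪ selfOverlap Λ (-t))
    (hx : x ∈ window Λ R \ (selfOverlap (window Λ R) t ∪ selfOverlap (window Λ R) (-t))) :
    R < |x| + |t| := by
  obtain ⟨hxR, hisolated⟩ := hx
  by_contra! hR
  have mem_of_abs_le : ∀ s, |s| = |t| → x - s ∈ Λ → x - s ∈ window Λ R := fun s hs hxs =>
    ⟨hxs, abs_le.1 ((abs_sub x s).trans (hs ▸ hR))⟩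
  exact hisolated <| (hΛ hxR.1).imp (fun h => ⟨hxR, mem_of_abs_le t rfl h.2⟩)
    (fun h => ⟨hxR, mem_of_abs_le (-t) (abs_neg t) h.2⟩)

lemma ncard_le_four_of_lt_abs_add_two {R : ℝ} {s : Set ℝ} (hs : s ⊆ range ((↑) : ℤ → ℝ))
    (hle : ∀ x ∈ s, |x| ≤ R) (hlt : ∀ x ∈ s, R < |x| + 2) : s.ncard ≤ 4 := by
  have subset_ends : s ⊆ ((↑) : ℤ → ℝ) '' ({⌊R⌋, ⌊R⌋ - 1, -⌊R⌋, -⌊R⌋ + 1} : Finset ℤ) := by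
    intro x hx
    obtain ⟨z, rfl⟩ := hs hx
    have hle_floor : |z| ≤ ⌊R⌋ := Int.le_floor.2 (by exact_mod_cast hle _ hx)
    have hfloor_lt : ⌊R⌋ < |z| + 2 := Int.floor_lt.2 (by exact_mod_cast hlt _ hx)
    refine mem_image_of_mem _ ?_
    simp only [Finset.coe_insert, Finset.coe_singleton, mem_insert_iff, mem_singleton_iff]
    rcases abs_choice z with hz | hz <;> lia
  calc s.ncard ≤ _ := ncard_le_ncard subset_ends (Finset.finite_toSet _ |>.image _)
    _ ≤ _ := ncard_image_le (Finset.finite_toSet _)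
    _ ≤ 4 := by rw [ncard_coe_finset]; exact Finset.card_le_four

end Windows

section Autocorrelation

open Metric

lemma autoCorr_eq_ncard_selfOverlap_div {F : Set ℝ} (hF : F.Finite) {t : ℝ} {f : ℝ → ℂ}
    (hft : f t = 1) (hf : ∀ x ∈ F, ∀ y ∈ F, x - y ≠ t → f (x - y) = 0) :
    autoCorr F f = (selfOverlap F t).ncard / F.ncard := by
  classical
  have inner_sum : ∀ x ∈ F, ∑ᶠ y ∈ F, f (x - y) = if x - t ∈ F then 1 else 0 := by
    intro x hx
    have hterm : ∀ y ∈ F, f (x - y) = if x - t = y then 1 else 0 := by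
      intro y hy
      split_ifs with hxy
      · rw [← hxy, sub_sub_cancel, hft]
      · exact hf x hx y hy fun h => hxy (by linarith)
    rw [finsum_mem_congr rfl hterm, finsum_mem_eq_finite_toFinset_sum _ hF, Finset.sum_ite_eq]
    simp only [hF.mem_toFinset]
  have card_filter : (hF.toFinset.filter (· - t ∈ F)).card = (selfOverlap F t).ncard := by
    rw [← ncard_coe_finset]
    simp [selfOverlap]
  rw [autoCorr, finsum_mem_congr rfl inner_sum, finsum_mem_eq_finite_toFinset_sum _ hF,
    Finset.sum_boole, card_filter, div_eq_inv_mul]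

lemma measureReal_singleton_eq_of_forall_integral_bump {E : Type*} [NormedAddCommGroup E]
    [NormedSpace ℝ E] [FiniteDimensional ℝ E] [MeasurableSpace E] [BorelSpace E]
    {μ : Measure E} [IsLocallyFiniteMeasure μ] {x : E} {c : ℝ}
    (h : ∀ φ : ContDiffBump x, φ.rOut ≤ 1 → ∫ y, φ y ∂μ = c) : μ.real {x} = c := by
  apply le_antisymm
  · let φ : ContDiffBump x := ⟨1 / 2, 1, by norm_num, by norm_num⟩
    calc μ.real {x} ≤ μ.real (closedBall x φ.rIn) :=
          measureReal_mono (singleton_subset_iff.2 (mem_closedBall_self φ.rIn_pos.le))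
            measure_closedBall_lt_top.ne
      _ ≤ ∫ y, φ y ∂μ := φ.measure_closedBall_le_integral μ
      _ = c := h φ le_rfl
  · have tendsto_measure : Tendsto (fun r => μ.real (cthickening r {x})) (𝓝[>] 0)
        (𝓝 (μ.real {x})) :=
      ((ENNReal.tendsto_toReal isCompact_singleton.measure_lt_top.ne).comp
        (tendsto_measure_cthickening_of_isCompact isCompact_singleton)).mono_left
          nhdsWithin_le_nhds
    refine ge_of_tendsto tendsto_measure ?_
    filter_upwards [Ioc_mem_nhdsGT one_pos] with r ⟨hr, hr1⟩
    let φ : ContDiffBump x := ⟨r / 2, r, half_pos hr, half_lt_self hr⟩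
    rw [← h φ hr1, cthickening_singleton x hr.le]
    exact φ.integral_le_measure_closedBall μ

theorem tendsto_ncard_selfOverlap_div {ι : Type*} {l : Filter ι} [l.NeBot] {F : ι → Set ℝ}
    (hfin : ∀ i, (F i).Finite) (hint : ∀ i, F i ⊆ range ((↑) : ℤ → ℝ))
    {γ : Measure ℝ} [IsFiniteMeasureOnCompacts γ]
    (hconv : ∀ f : ℝ → ℂ, Continuous f → HasCompactSupport f →
      Tendsto (fun i => autoCorr (F i) f) l (𝓝 (∫ x, f x ∂γ))) (t : ℤ) :
    Tendsto (fun i => ((selfOverlap (F i) t).ncard / (F i).ncard : ℝ)) l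
      (𝓝 (γ.real {(t : ℝ)})) := by
  have tendsto_integral_bump : ∀ φ : ContDiffBump (t : ℝ), φ.rOut ≤ 1 →
      Tendsto (fun i => ((selfOverlap (F i) t).ncard / (F i).ncard : ℝ)) l
        (𝓝 (∫ x, φ x ∂γ)) := by
    intro φ hφ
    have vanishes : ∀ i, ∀ x ∈ F i, ∀ y ∈ F i, x - y ≠ t → (φ (x - y) : ℂ) = 0 := by
      intro i x hx y hy hxy
      obtain ⟨a, rfl⟩ := hint i hx
      obtain ⟨b, rfl⟩ := hint i hy
      have one_le_dist : 1 ≤ |a - b - t| := Int.one_le_abs (sub_ne_zero.2 (by exact_mod_cast hxy))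
      rw [φ.zero_of_le_dist (hφ.trans ?_), Complex.ofReal_zero]
      rw [Real.dist_eq]
      exact_mod_cast one_le_dist
    rw [← tendsto_ofReal_iff, ← integral_complex_ofReal]
    refine (hconv (fun x => φ x) (Complex.continuous_ofReal.comp φ.continuous)
      (φ.hasCompactSupport.comp_left Complex.ofReal_zero)).congr fun i => ?_
    have apply_center : φ t = 1 := φ.eventuallyEq_one.eq_of_nhds
    rw [autoCorr_eq_ncard_selfOverlap_div (hfin i) (by simp [apply_center]) (vanishes i)]
    push_cast
    rfl
  let unitBump : ContDiffBump (t : ℝ) := ⟨1 / 2, 1, by norm_num, by norm_num⟩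
  have tendsto_unitBump := tendsto_integral_bump unitBump le_rfl
  rwa [measureReal_singleton_eq_of_forall_integral_bump fun φ hφ =>
    tendsto_nhds_unique (tendsto_integral_bump φ hφ) tendsto_unitBump]

end Autocorrelation

lemma tendsto_div_of_abs_sub_mul_le {α : Type*} {l : Filter α} {a b : α → ℝ} {c C : ℝ}
    (hb : Tendsto b l atTop) (h : ∀ x, |a x - c * b x| ≤ C) :
    Tendsto (fun x => a x / b x) l (𝓝 c) := by
  have tendsto_error : Tendsto (fun x => (a x - c * b x) / b x) l (𝓝 0) := by
    refine squeeze_zero_norm' ?_ (hb.const_div_atTop C)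
    filter_upwards [hb.eventually_gt_atTop 0] with x hx
    rw [Real.norm_eq_abs, abs_div, abs_of_pos hx]
    exact div_le_div_of_nonneg_right (h x) hx.le
  rw [← zero_add c]
  refine (tendsto_error.add_const c).congr' ?_
  filter_upwards [hb.eventually_ne_atTop 0] with x hx
  field_simp
  ring

section TwinPrimes

lemma primesR_eq_image : PrimesR = ((↑) : ℤ → ℝ) '' {z | Prime z} := by
  ext x
  constructor
  · rintro ⟨p, hp, rfl | rfl⟩
    · exact ⟨p, Nat.prime_iff_prime_int.1 hp, by simp⟩
    · exact ⟨-p, (Nat.prime_iff_prime_int.1 hp).neg, by simp⟩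
  · rintro ⟨z, hz, rfl⟩
    refine ⟨z.natAbs, Int.prime_iff_natAbs_prime.1 hz, ?_⟩
    exact eq_or_eq_neg_of_abs_eq (by simp)

lemma intCast_mem_primesR {z : ℤ} : (z : ℝ) ∈ PrimesR ↔ Prime z := by
  rw [primesR_eq_image, Int.cast_injective.mem_set_image, mem_ofPred_eq]

lemma intCast_mem_P2 {z : ℤ} :
    (z : ℝ) ∈ P2 ↔ (Prime z ∧ Prime (z + 2)) ∨ (Prime (z - 2) ∧ Prime z) := by
  simp only [← intCast_mem_primesR, Int.cast_add, Int.cast_sub, Int.cast_ofNat]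
  rfl

lemma P2_subset_range_intCast : P2 ⊆ range ((↑) : ℤ → ℝ) := by
  intro x hx
  have hprime : x ∈ PrimesR := hx.elim And.left And.right
  rw [primesR_eq_image] at hprime
  exact image_subset_range _ _ hprime

lemma P2_subset_selfOverlap_union : P2 ⊆ selfOverlap P2 2 ∪ selfOverlap P2 (-2) := by
  intro x hx
  rcases id hx with ⟨hlower, hupper⟩ | ⟨hlower, hupper⟩
  · exact Or.inr ⟨hx, Or.inr ⟨by simpa using hlower, by simpa using hupper⟩⟩
  · exact Or.inl ⟨hx, Or.inl ⟨hlower, by simpa using hupper⟩⟩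

lemma eq_five_or_eq_neg_five_of_prime {z : ℤ} (hlower : Prime (z - 2)) (hz : Prime z)
    (hupper : Prime (z + 2)) : z = 5 ∨ z = -5 := by
  have natAbs_eq_three : ∀ {w : ℤ}, Prime w → 3 ∣ w → w.natAbs = 3 := fun hw h =>
    ((Nat.prime_dvd_prime_iff_eq Nat.prime_three (Int.prime_iff_natAbs_prime.1 hw)).1
      (by lia)).symm
  have two_le_natAbs : ∀ {w : ℤ}, Prime w → 2 ≤ w.natAbs := fun hw =>
    (Int.prime_iff_natAbs_prime.1 hw).two_le
  have hlower_ge := two_le_natAbs hlower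
  have hz_ge := two_le_natAbs hz
  have hupper_ge := two_le_natAbs hupper
  have three_dvd : 3 ∣ z - 2 ∨ 3 ∣ z ∨ 3 ∣ z + 2 := by lia
  rcases three_dvd with h | h | h
  · have := natAbs_eq_three hlower h
    lia
  · have := natAbs_eq_three hz h
    lia
  · have := natAbs_eq_three hupper h
    lia

lemma selfOverlap_P2_inter : selfOverlap P2 2 ∩ selfOverlap P2 (-2) = {5, -5} := by
  apply Subset.antisymm
  · rintro x ⟨⟨hx, hlower⟩, -, hupper⟩
    obtain ⟨z, rfl⟩ := P2_subset_range_intCast hx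
    have prime_of_mem : ∀ {w : ℤ}, (w : ℝ) ∈ P2 → Prime w := fun hw =>
      (intCast_mem_P2.1 hw).elim And.left And.right
    have hz := eq_five_or_eq_neg_five_of_prime (prime_of_mem (by exact_mod_cast hlower))
      (prime_of_mem hx) (prime_of_mem (by simpa using hupper))
    simp only [mem_insert_iff, mem_singleton_iff]
    exact_mod_cast hz
  · have mem_P2 : ∀ z : ℤ, z.natAbs = 3 ∨ z.natAbs = 5 ∨ z.natAbs = 7 → (z : ℝ) ∈ P2 := by
      intro z hz
      have hz' : z = 3 ∨ z = 5 ∨ z = 7 ∨ z = -3 ∨ z = -5 ∨ z = -7 := by lia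
      rw [intCast_mem_P2]
      simp only [Int.prime_iff_natAbs_prime]
      rcases hz' with rfl | rfl | rfl | rfl | rfl | rfl <;> norm_num
    have mem_inter : ∀ z : ℤ, z.natAbs = 5 →
        (z : ℝ) ∈ selfOverlap P2 2 ∩ selfOverlap P2 (-2) := by
      intro z hz
      have hmem := mem_P2 z (by lia)
      exact ⟨⟨hmem, by exact_mod_cast mem_P2 (z - 2) (by lia)⟩,
        ⟨hmem, by simpa using mem_P2 (z + 2) (by lia)⟩⟩
    rintro x (rfl | rfl)
    · exact_mod_cast mem_inter 5 rfl
    · exact_mod_cast mem_inter (-5) rfl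

lemma ncard_selfOverlap_P2_inter : (selfOverlap P2 2 ∩ selfOverlap P2 (-2)).ncard = 2 := by
  rw [selfOverlap_P2_inter, ncard_pair (by norm_num)]

lemma setOf_prime_add_two_eq :
    {z : ℤ | Prime z ∧ Prime (z + 2)} = (fun p : ℕ => (p : ℤ)) '' {p | p.Prime ∧ (p + 2).Prime} ∪
      (fun p : ℕ => -(p : ℤ) - 2) '' {p | p.Prime ∧ (p + 2).Prime} := by
  ext z
  simp only [Int.prime_iff_natAbs_prime]
  constructor
  · rintro ⟨hz, hz'⟩
    have hz_ge := hz.two_le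
    rcases le_total 0 z with hnonneg | hnonpos
    · exact Or.inl ⟨z.natAbs, ⟨hz, by convert hz' using 1; lia⟩, by lia⟩
    · exact Or.inr ⟨(z + 2).natAbs, ⟨hz', by convert hz using 1; lia⟩, by lia⟩
  · rintro (⟨p, ⟨hp, hp'⟩, rfl⟩ | ⟨p, ⟨hp, hp'⟩, rfl⟩)
    · exact ⟨hp, hp'⟩
    · exact ⟨by convert hp' using 1; lia, by convert hp using 1; lia⟩

lemma P2_eq_image : P2 = ((↑) : ℤ → ℝ) ''
    ({z | Prime z ∧ Prime (z + 2)} ∪ (· + 2) '' {z | Prime z ∧ Prime (z + 2)}) := by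
  ext x
  constructor
  · intro hx
    obtain ⟨z, rfl⟩ := P2_subset_range_intCast hx
    refine mem_image_of_mem _ ((intCast_mem_P2.1 hx).imp id fun h => ⟨z - 2, ?_⟩)
    simpa using h
  · rintro ⟨z, hz | ⟨w, hw, rfl⟩, rfl⟩
    · exact intCast_mem_P2.2 (Or.inl hz)
    · exact intCast_mem_P2.2 (Or.inr (by simpa using hw))

lemma P2_infinite_iff : P2.Infinite ↔ {p : ℕ | p.Prime ∧ (p + 2).Prime}.Infinite := by
  rw [← not_iff_not, not_infinite, not_infinite, P2_eq_image,
    finite_image_iff Int.cast_injective.injOn, finite_union,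
    finite_image_iff (add_left_injective 2).injOn, and_self, setOf_prime_add_two_eq, finite_union,
    finite_image_iff Nat.cast_injective.injOn, finite_image_iff, and_self]
  exact fun p _ q _ h => by simpa using h

lemma abs_ncard_selfOverlap_window_P2_sub_le (R : ℝ) :
    |((selfOverlap (window P2 R) 2).ncard : ℝ) - 1 / 2 * (window P2 R).ncard| ≤ 2 := by
  have counting := two_mul_ncard_selfOverlap_add (finite_window P2_subset_range_intCast R) 2
  have ncard_isolated_le := ncard_le_four_of_lt_abs_add_two (R := R)
    (s := window P2 R \ (selfOverlap (window P2 R) 2 ∪ selfOverlap (window P2 R) (-2)))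
    (fun _ hx => P2_subset_range_intCast hx.1.1) (fun _ hx => abs_le.2 hx.1.2)
    (fun _ hx => by simpa using lt_abs_add_abs_of_mem_window_diff P2_subset_selfOverlap_union hx)
  have ncard_inter_le := ncard_le_ncard
    (inter_subset_inter (selfOverlap_mono (inter_subset_left : window P2 R ⊆ P2) 2)
      (selfOverlap_mono (inter_subset_left : window P2 R ⊆ P2) (-2)))
    (selfOverlap_P2_inter ▸ toFinite _)
  rw [ncard_selfOverlap_P2_inter] at ncard_inter_le
  rify at counting ncard_isolated_le ncard_inter_le
  rw [abs_le]
  constructor <;> linarith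

lemma tendsto_ncard_selfOverlap_window_P2_of_infinite (h : P2.Infinite) :
    Tendsto (fun R => ((selfOverlap (window P2 R) 2).ncard / (window P2 R).ncard : ℝ)) atTop
      (𝓝 (1 / 2)) :=
  tendsto_div_of_abs_sub_mul_le
    (tendsto_natCast_atTop_atTop.comp
      (tendsto_ncard_window (finite_window P2_subset_range_intCast) h))
    abs_ncard_selfOverlap_window_P2_sub_le

lemma tendsto_ncard_selfOverlap_window_P2_of_finite (h : P2.Finite) :
    Tendsto (fun R => ((selfOverlap (window P2 R) 2).ncard / (window P2 R).ncard : ℝ)) atTop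
      (𝓝 ((selfOverlap P2 2).ncard / P2.ncard)) :=
  tendsto_const_nhds.congr' <| (eventually_window_eq h).mono fun _ hR => by simp only [hR]

lemma one_half_lt_ncard_selfOverlap_P2_div (h : P2.Finite) :
    (1 / 2 : ℝ) < (selfOverlap P2 2).ncard / P2.ncard := by
  have counting := two_mul_ncard_selfOverlap_add h 2
  rw [sdiff_eq_empty.2 P2_subset_selfOverlap_union, ncard_empty, ncard_selfOverlap_P2_inter]
    at counting
  have five_mem : (5 : ℝ) ∈ P2 :=
    (selfOverlap_P2_inter.symm.subset (mem_insert 5 {-5})).1.1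
  have ncard_pos : (0 : ℝ) < P2.ncard := by exact_mod_cast (ncard_pos h).2 ⟨5, five_mem⟩
  rify at counting
  rw [lt_div_iff₀ ncard_pos]
  linarith

end TwinPrimes

theorem twin_primes_autocorrelation_iff_infinitely_many_general
    {ι : Type*} {l : Filter ι} [l.NeBot] {r : ι → ℝ} (hr : Tendsto r l atTop)
    (γ : Measure ℝ) [IsFiniteMeasureOnCompacts γ]
    (hconv : ∀ f : ℝ → ℂ, Continuous f → HasCompactSupport f →
      Tendsto (fun i => autoCorr (P2 ∩ Icc (-r i) (r i)) f) l (𝓝 (∫ x, f x ∂γ))) :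
    γ {(2 : ℝ)} = 1 / 2 ↔ {p : ℕ | p.Prime ∧ (p + 2).Prime}.Infinite := by
  have tendsto_measure := tendsto_ncard_selfOverlap_div
    (fun i => finite_window P2_subset_range_intCast (r i))
    (fun _ => inter_subset_left.trans P2_subset_range_intCast) hconv 2
  rw [Int.cast_ofNat] at tendsto_measure
  have measure_eq_iff : γ {(2 : ℝ)} = 1 / 2 ↔ γ.real {(2 : ℝ)} = 1 / 2 := by
    rw [Measure.real, ← ENNReal.toReal_eq_toReal_iff' isCompact_singleton.measure_lt_top.ne
      (by simp)]
    simp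
  rw [measure_eq_iff, ← P2_infinite_iff]
  constructor
  · intro hhalf hfin
    have hlim := tendsto_nhds_unique tendsto_measure
      ((tendsto_ncard_selfOverlap_window_P2_of_finite hfin).comp hr)
    exact (one_half_lt_ncard_selfOverlap_P2_div hfin).ne (hhalf.symm.trans hlim)
  · exact fun hinf => tendsto_nhds_unique tendsto_measure
      ((tendsto_ncard_selfOverlap_window_P2_of_infinite hinf).comp hr)

theorem twin_primes_autocorrelation_iff_infinitely_many
    (nk : ℕ → ℕ) (hnk : StrictMono nk)
    (γ : Measure ℝ) [IsFiniteMeasureOnCompacts γ]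
    (hconv : ∀ f : ℝ → ℂ, Continuous f → HasCompactSupport f →
      Tendsto (fun k => autoCorr (P2 ∩ Set.Icc (-(nk k : ℝ)) ((nk k : ℝ))) f) atTop
        (nhds (∫ x, f x ∂γ))) :
    γ {(2 : ℝ)} = 1/2 ↔ {p : ℕ | p.Prime ∧ (p + 2).Prime}.Infinite :=
  twin_primes_autocorrelation_iff_infinitely_many_general
    (tendsto_natCast_atTop_atTop.comp hnk.tendsto_atTop) γ hconv
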